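/- For all integers k ≥ 2 and m ≥ 1, there exists a binary matrix with (2^k−1)m − k rows and (2^k−1)m columns in which every nonempty 1-free set of columns has cardinality at least 2^{k−1}·m. -/

import Mathlib

/-!
For `k = m = 1` take the matrix with one column and no rows. Pass from `k` to `k + 1` by replacing
`A` with the block matrix with rows `(A 0 0)` and `(1 1 𝟙)`. A 1-free set avoiding the last column
consists of two copies of one 1-free set of `A`; a 1-free set containing the last column must meet
every pair of copies of an old column. Either way it has at least `2 ^ k` elements. For general
`m`, append `m - 1` twins of every column: a row supported on a column and its twin forces a 1-free
set to contain both or neither.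
-/

open Finset Matrix

variable {ρ σ α β : Type*}

/-- A binary matrix, encoded with natural number entries so that column sums are taken over the
integers. -/
def IsBinary (A : Matrix ρ α ℕ) : Prop :=
  ∀ i j, A i j ≤ 1

/-- A 1-free set of columns; unlike in the paper, the empty set is allowed. -/
def OneFree (A : Matrix ρ α ℕ) (S : Finset α) : Prop :=
  ∀ i, ∑ j ∈ S, A i j ≠ 1

/-- `d` is a lower bound for the size of nonempty 1-free sets, as for the minimum distance of a
code. -/
def OneFreeCardGE (A : Matrix ρ α ℕ) (d : ℕ) : Prop :=
  ∀ S : Finset α, S.Nonempty → OneFree A S → d ≤ #S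

/-- The parameters `(r, n, d)` are attained by a binary `r × n` matrix whose nonempty 1-free sets
have at least `d` elements. -/
def OneFreeRealizable (r n d : ℕ) : Prop :=
  ∃ A : Matrix (Fin r) (Fin n) ℕ, IsBinary A ∧ OneFreeCardGE A d

theorem IsBinary.zero : IsBinary (0 : Matrix ρ α ℕ) := fun _ _ ↦ zero_le_one

theorem IsBinary.one [DecidableEq α] : IsBinary (1 : Matrix α α ℕ) := fun i j ↦ by
  rw [one_apply]
  split_ifs <;> simp

theorem IsBinary.submatrix {A : Matrix ρ α ℕ} (hA : IsBinary A) (f : σ → ρ) (g : β → α) :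
    IsBinary (A.submatrix f g) :=
  fun i j ↦ hA (f i) (g j)

theorem IsBinary.fromCols {A : Matrix ρ α ℕ} {B : Matrix ρ β ℕ} (hA : IsBinary A)
    (hB : IsBinary B) : IsBinary (fromCols A B) := by
  rintro i (j | j)
  exacts [hA i j, hB i j]

theorem IsBinary.fromBlocks {A : Matrix ρ α ℕ} {B : Matrix ρ β ℕ} {C : Matrix σ α ℕ}
    {D : Matrix σ β ℕ} (hA : IsBinary A) (hB : IsBinary B) (hC : IsBinary C) (hD : IsBinary D) :
    IsBinary (fromBlocks A B C D) := by
  rintro (i | i) (j | j)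
  exacts [hA i j, hB i j, hC i j, hD i j]

theorem oneFree_submatrix_equiv {A : Matrix ρ α ℕ} (e : σ ≃ ρ) (f : β ≃ α) {S : Finset β} :
    OneFree (A.submatrix e f) S ↔ OneFree A (S.map f.toEmbedding) := by
  simp only [OneFree, submatrix_apply, sum_map, Equiv.coe_toEmbedding, e.forall_congr_left,
    Equiv.apply_symm_apply]

theorem OneFreeCardGE.submatrix_equiv {A : Matrix ρ α ℕ} {d : ℕ} (hA : OneFreeCardGE A d)
    (e : σ ≃ ρ) (f : β ≃ α) : OneFreeCardGE (A.submatrix e f) d := fun S hS hfree ↦ by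
  simpa only [card_map] using hA _ hS.map ((oneFree_submatrix_equiv e f).1 hfree)

theorem OneFreeCardGE.realizable [Fintype ρ] [Fintype α] {A : Matrix ρ α ℕ} {d : ℕ}
    (hA : OneFreeCardGE A d) (hbin : IsBinary A) :
    OneFreeRealizable (Fintype.card ρ) (Fintype.card α) d :=
  ⟨_, hbin.submatrix _ _, hA.submatrix_equiv (Fintype.equivFin ρ).symm (Fintype.equivFin α).symm⟩

theorem oneFree_fromBlocks_zero {A : Matrix ρ α ℕ} {C : Matrix σ α ℕ} {D : Matrix σ β ℕ}
    {S : Finset (α ⊕ β)} :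
    OneFree (fromBlocks A 0 C D) S ↔ OneFree A S.toLeft ∧
      ∀ i, ∑ j ∈ S.toLeft, C i j + ∑ j ∈ S.toRight, D i j ≠ 1 := by
  simp [OneFree, sum_sum_eq_sum_toLeft_add_sum_toRight]

/-- The block matrix with rows `(A 0 0)` and `(1 1 𝟙)`, the step from `k` to `k + 1`. -/
def doubleColumns [DecidableEq α] (A : Matrix ρ α ℕ) : Matrix (ρ ⊕ α) (α ⊕ (α ⊕ Unit)) ℕ :=
  fromBlocks A 0 1 (fromCols 1 (of fun _ _ ↦ 1))

/-- The matrix `A` with twins `(a, t)`, `t : ι`, of every column `a` appended, together with one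
row for each twin, supported on the twin and its original. -/
def appendTwins [DecidableEq α] [DecidableEq β] (A : Matrix ρ α ℕ) :
    Matrix (ρ ⊕ α × β) (α ⊕ α × β) ℕ :=
  fromBlocks A 0 ((1 : Matrix α α ℕ).submatrix Prod.fst id) 1

section Constructions

variable [DecidableEq α] [DecidableEq β] {A : Matrix ρ α ℕ} {d : ℕ}

theorem IsBinary.doubleColumns (hA : IsBinary A) : IsBinary (doubleColumns A) :=
  hA.fromBlocks .zero .one (IsBinary.one.fromCols fun _ _ ↦ le_rfl)

theorem IsBinary.appendTwins (hA : IsBinary A) :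
    IsBinary (appendTwins A : Matrix (ρ ⊕ α × β) (α ⊕ α × β) ℕ) :=
  hA.fromBlocks .zero (IsBinary.one.submatrix _ _) .one

theorem oneFree_doubleColumns {S : Finset (α ⊕ (α ⊕ Unit))} :
    OneFree (doubleColumns A) S ↔ OneFree A S.toLeft ∧
      ∀ a, (if a ∈ S.toLeft then 1 else 0) +
        ((if a ∈ S.toRight.toLeft then 1 else 0) + #S.toRight.toRight) ≠ 1 := by
  simp [doubleColumns, oneFree_fromBlocks_zero, sum_sum_eq_sum_toLeft_add_sum_toRight, one_apply]

theorem oneFree_appendTwins {S : Finset (α ⊕ α × β)} :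
    OneFree (appendTwins A) S ↔
      OneFree A S.toLeft ∧ ∀ p, p ∈ S.toRight ↔ p.1 ∈ S.toLeft := by
  refine oneFree_fromBlocks_zero.trans (and_congr_right fun _ ↦ forall_congr' fun p ↦ ?_)
  by_cases hp : p ∈ S.toRight <;> by_cases ha : p.1 ∈ S.toLeft <;>
    simp_all [one_apply]

theorem OneFreeCardGE.doubleColumns [Fintype α] (hA : OneFreeCardGE A d) :
    OneFreeCardGE (doubleColumns A) (min (2 * d) (Fintype.card α + 1)) := by
  intro S hS hfree
  obtain ⟨hleft, hpair⟩ := oneFree_doubleColumns.1 hfree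
  have hcard : #S = #S.toLeft + (#S.toRight.toLeft + #S.toRight.toRight) := by
    simp only [card_toLeft_add_card_toRight]
  rcases S.toRight.toRight.eq_empty_or_nonempty with hlast | hlast
  · have hcopies : S.toRight.toLeft = S.toLeft := by
      ext a
      have := hpair a
      by_cases a ∈ S.toLeft <;> by_cases a ∈ S.toRight.toLeft <;> simp_all
    have hne : S.toLeft.Nonempty := by
      rw [← card_pos] at hS ⊢
      rw [hcopies, hlast, card_empty] at hcard
      lia
    have := hA _ hne hleft
    rw [hcopies] at hcard
    lia
  · have hone : #S.toRight.toRight = 1 := by rw [hlast.eq_univ, card_univ, Fintype.card_unit]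
    have hcover : S.toLeft ∪ S.toRight.toLeft = univ := by
      refine eq_univ_of_forall fun a ↦ ?_
      by_contra ha
      rw [mem_union, not_or] at ha
      exact hpair a (by simp only [ha, if_false, hone])
    have := card_union_le S.toLeft S.toRight.toLeft
    rw [hcover, card_univ] at this
    lia

theorem OneFreeCardGE.appendTwins [Fintype β] (hA : OneFreeCardGE A d) :
    OneFreeCardGE (appendTwins A : Matrix (ρ ⊕ α × β) (α ⊕ α × β) ℕ)
      (d * (Fintype.card β + 1)) := by
  intro S hS hfree
  obtain ⟨hleft, htwins⟩ := oneFree_appendTwins.1 hfree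
  have hright : S.toRight = S.toLeft ×ˢ univ := by
    ext p
    simp only [htwins, mem_product, mem_univ, and_true]
  have hcard : #S = #S.toLeft * (Fintype.card β + 1) := by
    rw [← card_toLeft_add_card_toRight, hright, card_product, card_univ]
    ring
  have hne : S.toLeft.Nonempty := by
    rw [← card_pos] at hS ⊢
    exact Nat.pos_of_mul_pos_right (hcard ▸ hS)
  rw [hcard]
  exact Nat.mul_le_mul_right _ (hA _ hne hleft)

end Constructions

namespace OneFreeRealizable

variable {r n d : ℕ}

theorem doubleColumns (h : OneFreeRealizable r n d) :
    OneFreeRealizable (r + n) (2 * n + 1) (min (2 * d) (n + 1)) := by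
  obtain ⟨A, hbin, hA⟩ := h
  simpa [two_mul, add_assoc] using hA.doubleColumns.realizable hbin.doubleColumns

theorem appendTwins (h : OneFreeRealizable r n d) (t : ℕ) :
    OneFreeRealizable (r + n * t) (n * (t + 1)) (d * (t + 1)) := by
  obtain ⟨A, hbin, hA⟩ := h
  simpa [mul_add, add_comm] using
    (hA.appendTwins (β := Fin t)).realizable hbin.appendTwins

theorem zero_one_one : OneFreeRealizable 0 1 1 :=
  ⟨0, .zero, fun _ hS _ ↦ hS.card_pos⟩

theorem two_pow (k : ℕ) :
    OneFreeRealizable (2 ^ (k + 1) - (k + 2)) (2 ^ (k + 1) - 1) (2 ^ k) := by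
  induction k with
  | zero => exact zero_one_one
  | succ k ih =>
    have hlt : k + 1 < 2 ^ (k + 1) := Nat.lt_two_pow_self
    have hpow : 2 ^ (k + 1 + 1) = 2 * 2 ^ (k + 1) := pow_succ' _ _
    convert ih.doubleColumns using 1 <;> lia

end OneFreeRealizable

/-- For all integers `k ≥ 2` and `m ≥ 1`, there exists a binary matrix with
`(2^k−1)m − k` rows and `(2^k−1)m` columns in which every nonempty 1-free set of columns
has cardinality at least `2^(k−1) * m`. -/
theorem stmt_10 (k m : ℕ) (hk : 2 ≤ k) (hm : 1 ≤ m) :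
    ∃ A : Fin ((2 ^ k - 1) * m - k) → Fin ((2 ^ k - 1) * m) → ℕ,
      (∀ i j, A i j ≤ 1) ∧
      ∀ S : Finset (Fin ((2 ^ k - 1) * m)), S.Nonempty →
        (∀ i, ∑ j ∈ S, A i j ≠ 1) →
        2 ^ (k - 1) * m ≤ S.card := by
  obtain ⟨l, rfl⟩ : ∃ l, k = l + 1 := ⟨k - 1, by lia⟩
  obtain ⟨t, rfl⟩ : ∃ t, m = t + 1 := ⟨m - 1, by lia⟩
  have hlt : l + 1 < 2 ^ (l + 1) := Nat.lt_two_pow_self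
  have hrows : 2 ^ (l + 1) - (l + 2) + (2 ^ (l + 1) - 1) * t =
      (2 ^ (l + 1) - 1) * (t + 1) - (l + 1) := by
    rw [mul_add_one]
    lia
  exact hrows ▸ (OneFreeRealizable.two_pow l).appendTwins t
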